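/- arXiv:1210.3048 — 2 statements merged into one kernel-verified Lean document; each statement's English description precedes it below -/
import Mathlib

section
/- Let X be a shift space over a finite alphabet 𝒜 and let a, b ∈ 𝒜 with a ≠ b. Then X is flow equivalent to X^{a↦ab}; moreover the 1-block code that fixes every letter of 𝒜 and sends ◇ to b restricts to a conjugacy from X^{a↦a◇} onto X^{a↦ab}. -/
namespace SymbolicDynamics

/-! ### Basic symbolic dynamics set-up

All shift spaces are realized inside the full shift over the countable ambient
alphabet `ℕ`; an actual shift space uses only a finite subset of `ℕ` as its
alphabet.  This gives a uniform setting in which shift spaces over varying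
finite alphabets can be compared (as required by flow equivalence). -/

/-- Biinfinite sequences over the ambient alphabet `ℕ`. -/
abbrev Seq : Type := ℤ → ℕ

/-- The shift map `σ`, `(σ x) i = x (i+1)`. -/
def shift (x : Seq) : Seq := fun i => x (i + 1)

/-- The word `x_i x_{i+1} ⋯ x_{i+n-1}` of length `n` occurring in `x` at position `i`. -/
def wordAt (x : Seq) (i : ℤ) (n : ℕ) : List ℕ :=
  List.ofFn fun k : Fin n => x (i + (k.val : ℤ))

/-- `w` occurs as a factor of the biinfinite sequence `x`. -/
def FactorOf (w : List ℕ) (x : Seq) : Prop := ∃ i : ℤ, wordAt x i w.length = w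

/-- The language `B(X)`: all finite words occurring in points of `X`. -/
def lang (X : Set Seq) : Set (List ℕ) := {w | ∃ x ∈ X, FactorOf w x}

/-- `X_F`: the set of biinfinite sequences containing no word of `F` as a factor. -/
def XF (F : Set (List ℕ)) : Set Seq := {x | ∀ w ∈ F, ¬ FactorOf w x}

/-- `X` is a shift space over the finite alphabet `A ⊆ ℕ`: `X` is a closed,
shift-invariant set of biinfinite sequences with letters in `A`. -/
def IsSubshift (A : Set ℕ) (X : Set Seq) : Prop :=
  A.Finite ∧ IsClosed X ∧ (∀ x, x ∈ X ↔ shift x ∈ X) ∧ ∀ x ∈ X, ∀ i, x i ∈ A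

/-- `X` is a shift space (over some finite alphabet). -/
def IsShiftSpace (X : Set Seq) : Prop := ∃ A : Set ℕ, IsSubshift A X

/-- A conjugacy between `X` and `Y`: a shift-commuting homeomorphism. -/
def Conjugate (X Y : Set Seq) : Prop :=
  ∃ φ : ↥X ≃ₜ ↥Y, ∀ x y : ↥X, shift x.1 = y.1 → shift (φ x).1 = (φ y).1

/-- The (globally defined) map `φ` restricts to a conjugacy from `X` onto `Y`:
there is a shift-commuting homeomorphism `X → Y` whose underlying map is `φ`. -/
def ConjugacyVia (φ : Seq → Seq) (X Y : Set Seq) : Prop :=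
  ∃ h : ↥X ≃ₜ ↥Y, (∀ x : ↥X, (h x).1 = φ x.1) ∧
    ∀ x y : ↥X, shift x.1 = y.1 → shift (h x).1 = (h y).1

/-- `y` is obtained from `x` by replacing every occurrence of the letter `a` by
`a ◇` (with `◇ = d`), possibly followed by one shift.  The reindexing function
`p` records the position in `y` of the `k`-th letter of `x`. -/
def ExpandsTo (a d : ℕ) (x y : Seq) : Prop :=
  ∃ p : ℤ → ℤ, (p 0 = 0 ∨ p 0 = -1) ∧
    (∀ k, p (k + 1) = p k + if x k = a then 2 else 1) ∧
    (∀ k, y (p k) = x k) ∧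
    ∀ k, x k = a → y (p k + 1) = d

/-- The symbol expansion `X^{a ↦ a◇}` with `◇ = d` (a symbol not in the alphabet
of `X`): all sequences obtained from points of `X` by replacing every
occurrence of `a` by `a◇`, together with all shifts of such sequences. -/
def symbolExpansion (X : Set Seq) (a d : ℕ) : Set Seq := {y | ∃ x ∈ X, ExpandsTo a d x y}

/-- Flow equivalence: the smallest equivalence relation on shift spaces (over
varying finite alphabets) containing conjugacy and relating every shift space
`X` to its symbol expansion `X^{a ↦ a◇}` for every letter `a` of the alphabet of
`X` and every new symbol `◇` (Parry–Sullivan). -/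
inductive FlowEquiv : Set Seq → Set Seq → Prop
  | of_conjugate {X Y : Set Seq} (hX : IsShiftSpace X) (hY : IsShiftSpace Y)
      (h : Conjugate X Y) : FlowEquiv X Y
  | expand {X : Set Seq} {A : Set ℕ} (a d : ℕ) (hX : IsSubshift A X)
      (ha : a ∈ A) (hd : d ∉ A) : FlowEquiv X (symbolExpansion X a d)
  | symm {X Y : Set Seq} : FlowEquiv X Y → FlowEquiv Y X
  | trans {X Y Z : Set Seq} : FlowEquiv X Y → FlowEquiv Y Z → FlowEquiv X Z

/-- The full shift on `k` symbols (realized on the alphabet `{0, …, k-1}`). -/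
def fullShift (k : ℕ) : Set Seq := {x | ∀ i, x i < k}

/-- `X` is a shift of finite type. -/
def IsSFT (X : Set Seq) : Prop := ∃ F : Set (List ℕ), F.Finite ∧ X = XF F

/-- `X` is an `n`-step shift of finite type:  `X = X_F` for a finite set `F` of
forbidden words of length `n+1`. -/
def IsNStepSFT (X : Set Seq) (n : ℕ) : Prop :=
  ∃ F : Set (List ℕ), F.Finite ∧ (∀ w ∈ F, w.length = n + 1) ∧ X = XF F

/-- Irreducibility of a shift space. -/
def IsIrreducibleShift (X : Set Seq) : Prop :=
  ∀ u ∈ lang X, ∀ w ∈ lang X, ∃ v ∈ lang X, u ++ v ++ w ∈ lang X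

/-- Every position of an expanded sequence either carries a letter of the original sequence or
is the second position of the block replacing an occurrence of `a`. -/
lemma expansion_position_cover {a : ℕ} {x : Seq} {p : ℤ → ℤ}
    (hp : ∀ k, p (k + 1) = p k + if x k = a then 2 else 1) (i : ℤ) :
    ∃ k, p k = i ∨ (p k + 1 = i ∧ x k = a) := by
  induction i using Int.inductionOn' (b := p 0) with
  | zero => exact ⟨0, Or.inl rfl⟩
  | succ j _ ih =>
    obtain ⟨k, hk | ⟨hk, hxk⟩⟩ := ih
    · by_cases hxk : x k = a
      · exact ⟨k, Or.inr ⟨by omega, hxk⟩⟩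
      · exact ⟨k + 1, Or.inl (by rw [hp, if_neg hxk, hk])⟩
    · exact ⟨k + 1, Or.inl (by rw [hp, if_pos hxk]; omega)⟩
  | pred j _ ih =>
    obtain ⟨k, hk | ⟨hk, -⟩⟩ := ih
    · have h := hp (k - 1)
      rw [sub_add_cancel] at h
      by_cases hxk : x (k - 1) = a
      · rw [if_pos hxk] at h
        exact ⟨k - 1, Or.inr ⟨by omega, hxk⟩⟩
      · rw [if_neg hxk] at h
        exact ⟨k - 1, Or.inl (by omega)⟩
    · exact ⟨k, Or.inl (by omega)⟩

lemma expansion_position_mem_Icc {a : ℕ} {x : Seq} {p : ℤ → ℤ} (h0 : p 0 = 0 ∨ p 0 = -1)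
    (hp : ∀ k, p (k + 1) = p k + if x k = a then 2 else 1) (k : ℤ) :
    p k ∈ Set.Icc (-(2 * |k| + 1)) (2 * |k| + 1) := by
  have hstep : ∀ k, p k + 1 ≤ p (k + 1) ∧ p (k + 1) ≤ p k + 2 := by
    intro k
    rw [hp]
    split_ifs <;> omega
  have h : (0 ≤ k → -1 ≤ p k ∧ p k ≤ 2 * k) ∧ (k ≤ 0 → 2 * k - 1 ≤ p k ∧ p k ≤ 0) := by
    induction k using Int.induction_on with
    | zero => omega
    | succ j ih =>
      have := hstep j
      omega
    | pred j ih =>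
      have := hstep (-j - 1)
      rw [sub_add_cancel] at this
      omega
  rw [Set.mem_Icc]
  rcases abs_cases k with ⟨hk, _⟩ | ⟨hk, _⟩ <;> rw [hk] <;> omega

lemma ExpandsTo.apply_mem {A : Set ℕ} {a d : ℕ} {x y : Seq} (hx : ∀ i, x i ∈ A)
    (h : ExpandsTo a d x y) (i : ℤ) : y i ∈ insert d A := by
  obtain ⟨p, -, hp, hy, hd⟩ := h
  obtain ⟨k, rfl | ⟨rfl, hk⟩⟩ := expansion_position_cover hp i
  · exact Or.inr (hy k ▸ hx k)
  · exact Or.inl (hd k hk)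

/-- In an expanded sequence the new symbol occurs exactly after the occurrences of `a`. -/
lemma ExpandsTo.apply_add_one_eq_iff {A : Set ℕ} {a d : ℕ} {x y : Seq} (hx : ∀ i, x i ∈ A)
    (ha : a ∈ A) (hd : d ∉ A) (h : ExpandsTo a d x y) (i : ℤ) : y (i + 1) = d ↔ y i = a := by
  obtain ⟨p, -, hp, hy, hyd⟩ := h
  have hxd : ∀ k, x k ≠ d := fun k hk => hd (hk ▸ hx k)
  have had : a ≠ d := fun h => hd (h ▸ ha)
  obtain ⟨k, rfl | ⟨rfl, hk⟩⟩ := expansion_position_cover hp i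
  · rw [hy]
    refine ⟨fun h => by_contra fun hk => hxd (k + 1) ?_, hyd k⟩
    rw [← hy, hp, if_neg hk, h]
  · have h1 : p k + 1 + 1 = p (k + 1) := by rw [hp, if_pos hk]; ring
    rw [h1, hy, hyd k hk]
    exact ⟨fun h => absurd h (hxd _), fun h => absurd h.symm had⟩

lemma isCompact_of_isSubshift {A : Set ℕ} {X : Set Seq} (hX : IsSubshift A X) : IsCompact X :=
  (isCompact_univ_pi fun _ : ℤ => hX.1.isCompact).of_isClosed_subset hX.2.1
    fun x hx i _ => hX.2.2.2 x hx i

lemma shift_mem_symbolExpansion_iff {X : Set Seq} (hX : ∀ x, x ∈ X ↔ shift x ∈ X) (a d : ℕ)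
    (y : Seq) : y ∈ symbolExpansion X a d ↔ shift y ∈ symbolExpansion X a d := by
  constructor
  · rintro ⟨x, hx, p, h0 | h0, hp, hy, hd⟩
    · refine ⟨x, hx, fun k => p k - 1, Or.inr (by simp [h0]), fun k => ?_, fun k => ?_,
        fun k hk => ?_⟩
      · simp only [hp k]; ring
      · simp [shift, hy]
      · simpa [shift] using hd k hk
    · refine ⟨shift x, (hX x).1 hx, fun k => p (k + 1) - 1, ?_, fun k => ?_, fun k => ?_,
        fun k hk => ?_⟩
      · simp only [hp 0, h0]
        split_ifs <;> simp
      · change p (k + 1 + 1) - 1 = p (k + 1) - 1 + if x (k + 1) = a then 2 else 1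
        rw [hp]; ring
      · simp [shift, hy]
      · simpa [shift] using hd (k + 1) hk
  · rintro ⟨x, hx, p, h0 | h0, hp, hy, hd⟩
    · have hs : shift (fun k => x (k - 1)) = x := by
        funext k
        simp [shift]
      refine ⟨fun k => x (k - 1), (hX _).2 (hs.symm ▸ hx), fun k => p (k - 1) + 1, ?_,
        fun k => ?_, fun k => ?_, fun k hk => ?_⟩
      · have h := hp (0 - 1)
        rw [sub_add_cancel, h0] at h
        dsimp only
        split_ifs at h <;> omega
      · have h := hp (k - 1)
        rw [sub_add_cancel] at h
        simp only [add_sub_cancel_right, h]; ring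
      · exact hy (k - 1)
      · exact hd (k - 1) hk
    · refine ⟨x, hx, fun k => p k + 1, Or.inl (by simp [h0]), fun k => ?_, fun k => hy k,
        fun k hk => hd k hk⟩
      simp only [hp k]; ring

lemma isClosed_symbolExpansion {A : Set ℕ} {X : Set Seq} (hX : IsSubshift A X) (a d : ℕ) :
    IsClosed (symbolExpansion X a d) := by
  let C : Set (Seq × (ℤ → ℤ) × Seq) := {t | (t.2.1 0 = 0 ∨ t.2.1 0 = -1) ∧
    (∀ k, t.2.1 (k + 1) = t.2.1 k + if t.1 k = a then 2 else 1) ∧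
    (∀ k, t.2.2 (t.2.1 k) = t.1 k) ∧ ∀ k, t.1 k = a → t.2.2 (t.2.1 k + 1) = d}
  let B : Set (Seq × (ℤ → ℤ) × Seq) := X ×ˢ
    (Set.univ.pi fun k => Set.Icc (-(2 * |k| + 1)) (2 * |k| + 1)) ×ˢ
    (Set.univ.pi fun _ => insert d A)
  have hB : IsCompact B := (isCompact_of_isSubshift hX).prod
    ((isCompact_univ_pi fun _ => isCompact_Icc).prod
      (isCompact_univ_pi fun _ => (hX.1.insert d).isCompact))
  have heval : Continuous fun q : Seq × ℤ => q.1 q.2 :=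
    continuous_prod_of_discrete_right.2 fun j => continuous_apply j
  have hx : ∀ k, Continuous fun t : Seq × (ℤ → ℤ) × Seq => t.1 k := fun k => by fun_prop
  have hp : ∀ k, Continuous fun t : Seq × (ℤ → ℤ) × Seq => t.2.1 k := fun k => by fun_prop
  have hy : ∀ k c, Continuous fun t : Seq × (ℤ → ℤ) × Seq => t.2.2 (t.2.1 k + c) :=
    fun k c => heval.comp (continuous_snd.snd.prodMk ((hp k).add continuous_const))
  have hif : Continuous fun n : ℕ => (if n = a then 2 else 1 : ℤ) := continuous_of_discreteTopology
  have hC : IsClosed C := by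
    refine IsClosed.and ?_ (IsClosed.and ?_ (IsClosed.and ?_ ?_))
    · exact (isClosed_discrete {n : ℤ | n = 0 ∨ n = -1}).preimage (hp 0)
    · simp only [Set.ofPred_forall]
      exact isClosed_iInter fun k => isClosed_eq (hp _) ((hp k).add (hif.comp (hx k)))
    · simp only [Set.ofPred_forall]
      exact isClosed_iInter fun k => isClosed_eq (by simpa using hy k 0) (hx k)
    · simp only [Set.ofPred_forall]
      exact isClosed_iInter fun k => isClosed_imp
        ((isOpen_discrete {a}).preimage (hx k)) (isClosed_eq (hy k 1) continuous_const)
  have himage : symbolExpansion X a d = (fun t => t.2.2) '' (B ∩ C) := by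
    ext y
    constructor
    · rintro ⟨x, hxX, h⟩
      have hyA := h.apply_mem (hX.2.2.2 x hxX)
      obtain ⟨p, h0, h1, h2⟩ := h
      exact ⟨(x, p, y), ⟨⟨hxX, fun k _ => expansion_position_mem_Icc h0 h1 k,
        fun i _ => hyA i⟩, h0, h1, h2⟩, rfl⟩
    · rintro ⟨⟨x, p, y⟩, ⟨⟨hxX, -⟩, h⟩, rfl⟩
      exact ⟨x, hxX, p, h⟩
  rw [himage]
  exact ((hB.inter_right hC).image continuous_snd.snd).isClosed

lemma isSubshift_symbolExpansion {A : Set ℕ} {X : Set Seq} (hX : IsSubshift A X) (a d : ℕ) :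
    IsSubshift (insert d A) (symbolExpansion X a d) := by
  refine ⟨hX.1.insert d, isClosed_symbolExpansion hX a d,
    shift_mem_symbolExpansion_iff hX.2.2.1 a d, ?_⟩
  rintro y ⟨x, hx, h⟩
  exact h.apply_mem (hX.2.2.2 x hx)

/-- The 1-block code sending `d` to `b` and fixing all other letters. -/
def mergeCode (d b : ℕ) (y : Seq) : Seq := fun i => if y i = d then b else y i

/-- The sliding block code replacing the letter after each occurrence of `a` by `d`. -/
def splitCode (a d : ℕ) (z : Seq) : Seq := fun i => if z (i - 1) = a then d else z i

lemma continuous_mergeCode (d b : ℕ) : Continuous (mergeCode d b) :=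
  continuous_pi fun i => (continuous_of_discreteTopology
    (f := fun n : ℕ => if n = d then b else n)).comp (continuous_apply i)

lemma continuous_splitCode (a d : ℕ) : Continuous (splitCode a d) :=
  continuous_pi fun i =>
    have hf : Continuous fun q : ℕ × ℕ => if q.1 = a then d else q.2 :=
      continuous_of_discreteTopology
    hf.comp (f := fun z : Seq => (z (i - 1), z i)) (by fun_prop)

lemma shift_mergeCode (d b : ℕ) (y : Seq) :
    shift (mergeCode d b y) = mergeCode d b (shift y) := rfl

lemma shift_splitCode (a d : ℕ) (z : Seq) :
    shift (splitCode a d z) = splitCode a d (shift z) := by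
  funext i
  simp [shift, splitCode]

lemma splitCode_mergeCode {A : Set ℕ} {X : Set Seq} (hX : IsSubshift A X) {a b d : ℕ}
    (ha : a ∈ A) (hab : a ≠ b) (hd : d ∉ A) {y : Seq} (hy : y ∈ symbolExpansion X a d) :
    splitCode a d (mergeCode d b y) = y := by
  obtain ⟨x, hx, h⟩ := hy
  have had : a ≠ d := fun h => hd (h ▸ ha)
  funext i
  have hi := h.apply_add_one_eq_iff (hX.2.2.2 x hx) ha hd (i - 1)
  rw [sub_add_cancel] at hi
  simp only [splitCode, mergeCode]
  grind

lemma isSubshift_image_mergeCode {A : Set ℕ} {X : Set Seq} (hX : IsSubshift A X) {a b d : ℕ}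
    (ha : a ∈ A) (hb : b ∈ A) (hab : a ≠ b) (hd : d ∉ A) :
    IsSubshift A (mergeCode d b '' symbolExpansion X a d) := by
  have hY := isSubshift_symbolExpansion hX a d
  refine ⟨hX.1, ((isCompact_of_isSubshift hY).image (continuous_mergeCode d b)).isClosed,
    fun z => ⟨?_, ?_⟩, ?_⟩
  · rintro ⟨y, hy, rfl⟩
    exact ⟨shift y, (hY.2.2.1 y).1 hy, rfl⟩
  · rintro ⟨y, hy, hyz⟩
    have hs : shift (splitCode a d z) = y := by
      rw [shift_splitCode, ← hyz, splitCode_mergeCode hX ha hab hd hy]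
    refine ⟨splitCode a d z, (hY.2.2.1 _).2 (hs.symm ▸ hy), ?_⟩
    have hz : shift (mergeCode d b (splitCode a d z)) = shift z := by
      rw [shift_mergeCode, hs, hyz]
    funext i
    simpa [shift] using congrFun hz (i - 1)
  · rintro _ ⟨y, hy, rfl⟩ i
    simp only [mergeCode]
    split_ifs with h
    · exact hb
    · exact (hY.2.2.2 y hy i).resolve_left h

lemma conjugacyVia_mergeCode {A : Set ℕ} {X : Set Seq} (hX : IsSubshift A X) {a b d : ℕ}
    (ha : a ∈ A) (hab : a ≠ b) (hd : d ∉ A) :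
    ConjugacyVia (mergeCode d b) (symbolExpansion X a d)
      (mergeCode d b '' symbolExpansion X a d) := by
  have hinv : ∀ y ∈ symbolExpansion X a d, splitCode a d (mergeCode d b y) = y :=
    fun y hy => splitCode_mergeCode hX ha hab hd hy
  have hmem : ∀ z ∈ mergeCode d b '' symbolExpansion X a d,
      splitCode a d z ∈ symbolExpansion X a d := by
    rintro _ ⟨y, hy, rfl⟩
    rwa [hinv y hy]
  refine ⟨
    { toFun := fun y => ⟨mergeCode d b y.1, Set.mem_image_of_mem _ y.2⟩
      invFun := fun z => ⟨splitCode a d z.1, hmem z.1 z.2⟩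
      left_inv := fun y => Subtype.ext (hinv y.1 y.2)
      right_inv := ?_
      continuous_toFun := ((continuous_mergeCode d b).comp continuous_subtype_val).subtype_mk _
      continuous_invFun := ((continuous_splitCode a d).comp continuous_subtype_val).subtype_mk
        fun z => hmem z.1 z.2 },
    fun _ => rfl, ?_⟩
  · rintro ⟨_, y, hy, rfl⟩
    exact Subtype.ext (congrArg (mergeCode d b) (hinv y hy))
  · intro x y h
    change shift (mergeCode d b x.1) = mergeCode d b y.1
    rw [shift_mergeCode, h]

/-- Let `X` be a shift space over a finite alphabet `A` and
`a ≠ b ∈ A`.  Then `X` is flow equivalent to `X^{a ↦ ab}`; moreover the 1-block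
code fixing every letter of `A` and sending `◇` to `b` restricts to a conjugacy
from `X^{a ↦ a◇}` onto `X^{a ↦ ab}`. -/
theorem statement0 (A : Set ℕ) (X : Set Seq) (hX : IsSubshift A X)
    (a b : ℕ) (ha : a ∈ A) (hb : b ∈ A) (hab : a ≠ b) (d : ℕ) (hd : d ∉ A) :
    FlowEquiv X ((fun y : Seq => fun i => if y i = d then b else y i) ''
        symbolExpansion X a d) ∧
      ConjugacyVia (fun y : Seq => fun i => if y i = d then b else y i)
        (symbolExpansion X a d)
        ((fun y : Seq => fun i => if y i = d then b else y i) ''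
          symbolExpansion X a d) := by
  have hconj := conjugacyVia_mergeCode (b := b) hX ha hab hd
  refine ⟨(FlowEquiv.expand a d hX ha hd).trans (.of_conjugate
    ⟨_, isSubshift_symbolExpansion hX a d⟩
    ⟨_, isSubshift_image_mergeCode hX ha hb hab hd⟩ ?_), hconj⟩
  obtain ⟨h, -, hs⟩ := hconj
  exact ⟨h, hs⟩

end SymbolicDynamics
end

section
/- Let β > 1 with g(β) eventually periodic, say g(β) = g₁⋯g_n(g_{n+1}⋯g_{n+p})^∞ with n, p ∈ ℕ minimal, let (F_β, 𝓛_β) be the right Fischer cover of X_β (the explicit labelled graph with vertices v₁,…,v_{n+p}; for each 1 ≤ i ≤ n+p and 0 ≤ k < g_i an edge labelled k from v_i to v₁; for 1 ≤ i < n+p an edge labelled g_i from v_i to v_{i+1}; and an edge labelled g_{n+p} from v_{n+p} to v_{n+1}), and let π : X_{F_β} → X_β be the covering map sending a biinfinite edge path λ to its label sequence (𝓛_β(λ_i))_{i∈ℤ}. If g(β) is periodic, then π is bijective (1-to-1). If g(β) is eventually periodic but not periodic, then π is surjective, every fiber π^{−1}(x) has at most 2 elements, and some fiber has exactly 2 elements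 (π is 2-to-1). -/
namespace SymbolicDynamics

/-! ### Labelled graphs and sofic shifts -/

/-- A labelled directed graph over the ambient alphabet `ℕ`. -/
structure LGraph where
  V : Type
  E : Type
  src : E → V
  tgt : E → V
  lab : E → ℕ

namespace LGraph

/-- Biinfinite edge paths in `G`. -/
def paths (G : LGraph) : Set (ℤ → G.E) := {e | ∀ i : ℤ, G.tgt (e i) = G.src (e (i + 1))}

/-- The label sequence of a biinfinite edge path. -/
def labelMap (G : LGraph) (e : ℤ → G.E) : Seq := fun i => G.lab (e i)

/-- The shift space presented by the labelled graph `G`: label sequences of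
biinfinite edge paths. -/
def presents (G : LGraph) : Set Seq := {y | ∃ e ∈ G.paths, G.labelMap e = y}

/-- No vertex emits two distinct edges with the same label. -/
def RightResolving (G : LGraph) : Prop :=
  ∀ e f : G.E, G.src e = G.src f → G.lab e = G.lab f → e = f

/-- The graph is strongly connected (irreducible). -/
def StronglyConnected (G : LGraph) : Prop :=
  ∀ u v : G.V, Relation.ReflTransGen (fun a b => ∃ e : G.E, G.src e = a ∧ G.tgt e = b) u v

/-- The follower set of a vertex: label sequences of right-infinite paths
starting at that vertex. -/
def follower (G : LGraph) (v : G.V) : Set (ℕ → ℕ) :=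
  {y | ∃ e : ℕ → G.E, G.src (e 0) = v ∧ (∀ i : ℕ, G.tgt (e i) = G.src (e (i + 1))) ∧
    ∀ i : ℕ, y i = G.lab (e i)}

/-- Distinct vertices have distinct follower sets. -/
def FollowerSeparated (G : LGraph) : Prop :=
  ∀ u v : G.V, G.follower u = G.follower v → u = v

end LGraph

/-- A shift space is sofic iff it is presented by some finite labelled graph. -/
def IsSofic (X : Set Seq) : Prop :=
  ∃ G : LGraph, Finite G.V ∧ Finite G.E ∧ G.presents = X

/-! ### Beta-shifts -/

/-- `betaR β t n` is `rₙ(t)`: `r₀(t) = t`, `r_{n+1}(t) = frac (β · rₙ(t))`. -/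
noncomputable def betaR (β t : ℝ) : ℕ → ℝ
  | 0 => t
  | n + 1 => Int.fract (β * betaR β t n)

/-- `betaDigit β t n` is the digit `x_{n+1}(t) = ⌊β · rₙ(t)⌋` of the
β-expansion of `t` (0-based indexing). -/
noncomputable def betaDigit (β t : ℝ) (n : ℕ) : ℕ := (⌊β * betaR β t n⌋).toNat

/-- `g` is the generating sequence `g(β)` (with 0-based indexing,
`g i = g_{i+1}`): it equals the β-expansion `e(β)` of `1` if the latter is not
eventually zero, and equals `(a₁ ⋯ a_{k-1} (a_k - 1))^∞` if
`e(β) = a₁ ⋯ a_k 0 0 ⋯` with `a_k ≠ 0`. -/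
def IsGenSeq (β : ℝ) (g : ℕ → ℕ) : Prop :=
  ((¬ ∃ N : ℕ, ∀ n ≥ N, betaDigit β 1 n = 0) ∧ g = betaDigit β 1) ∨
  (∃ k : ℕ, betaDigit β 1 k ≠ 0 ∧ (∀ n > k, betaDigit β 1 n = 0) ∧
    ∀ n : ℕ, g n = if n % (k + 1) = k then betaDigit β 1 k - 1
      else betaDigit β 1 (n % (k + 1)))

/-- The words `xₙ(t) x_{n+1}(t) ⋯ x_m(t)` (`t ∈ [0,1]`, `1 ≤ n ≤ m`) of the
beta-shift. -/
def betaWords (β : ℝ) : Set (List ℕ) :=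
  {w | ∃ t ∈ Set.Icc (0 : ℝ) 1, ∃ n₀ m : ℕ,
    w = List.ofFn fun j : Fin m => betaDigit β t (n₀ + (j : ℕ))}

/-- The beta-shift `X_β`: the shift space whose language is `betaWords β`. -/
def betaShift (β : ℝ) : Set Seq := {x | ∀ (i : ℤ) (m : ℕ), wordAt x i m ∈ betaWords β}

/-- The labelled graph with vertices `v₁, …, v_{n+p}` (encoded as `Fin (n+p)`);
for each `1 ≤ i ≤ n+p` and each `0 ≤ k < g_i`, an edge labelled `k` from `v_i`
to `v₁`; for each `1 ≤ i < n+p`, an edge labelled `g_i` from `v_i` to `v_{i+1}`;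
and an edge labelled `g_{n+p}` from `v_{n+p}` to `v_{n+1}`.  (Here `g` is
0-based: `g i = g_{i+1}`.) -/
def betaGraph (n p : ℕ) (hp : 0 < p) (g : ℕ → ℕ) : LGraph where
  V := Fin (n + p)
  E := (Σ i : Fin (n + p), Fin (g (i : ℕ))) ⊕ Fin (n + p)
  src := Sum.elim (fun e => e.1) fun i => i
  tgt := Sum.elim (fun _ => ⟨0, by omega⟩) fun i =>
    if h : (i : ℕ) + 1 < n + p then ⟨(i : ℕ) + 1, h⟩ else ⟨n, by omega⟩
  lab := Sum.elim (fun e => (e.2 : ℕ)) fun i => g (i : ℕ)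

/-! ### Remainders of the greedy expansion -/

lemma betaR_add (β t : ℝ) (a b : ℕ) : betaR β t (a + b) = betaR β (betaR β t a) b := by
  induction b with
  | zero => rfl
  | succ b ih => rw [← add_assoc, betaR, ih, betaR]

lemma betaDigit_add (β t : ℝ) (a b : ℕ) :
    betaDigit β t (a + b) = betaDigit β (betaR β t a) b := by
  rw [betaDigit, betaDigit, betaR_add]

lemma betaR_nonneg (β : ℝ) {t : ℝ} (ht : 0 ≤ t) (k : ℕ) : 0 ≤ betaR β t k := by
  cases k with
  | zero => exact ht
  | succ k => exact Int.fract_nonneg _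

lemma betaR_lt_one (β : ℝ) {t : ℝ} (ht : t < 1) (k : ℕ) : betaR β t k < 1 := by
  cases k with
  | zero => exact ht
  | succ k => exact Int.fract_lt_one _

lemma betaR_le_one (β : ℝ) {t : ℝ} (ht : t ≤ 1) (k : ℕ) : betaR β t k ≤ 1 := by
  cases k with
  | zero => exact ht
  | succ k => exact (Int.fract_lt_one _).le

lemma betaR_succ {β t : ℝ} (hβ : 1 < β) (ht : 0 ≤ t) (k : ℕ) :
    betaR β t (k + 1) = β * betaR β t k - betaDigit β t k := by
  have h : 0 ≤ ⌊β * betaR β t k⌋ :=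
    Int.floor_nonneg.2 (mul_nonneg (by linarith) (betaR_nonneg β ht k))
  have hc : (betaDigit β t k : ℝ) = ⌊β * betaR β t k⌋ := by
    rw [betaDigit, ← Int.cast_natCast, Int.toNat_of_nonneg h]
  rw [hc, betaR, Int.fract]

lemma betaR_zero (β : ℝ) (k : ℕ) : betaR β 0 k = 0 := by
  induction k with
  | zero => rfl
  | succ k ih => simp [betaR, ih]

lemma betaDigit_eq_zero_of_betaR_eq_zero {β t : ℝ} {k m : ℕ} (h : betaR β t k = 0)
    (hm : k ≤ m) : betaDigit β t m = 0 := by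
  obtain ⟨j, rfl⟩ := Nat.exists_eq_add_of_le hm
  rw [betaDigit_add, h, betaDigit, betaR_zero]
  simp

/-- A bounded real cannot stay bounded under repeated multiplication by `β > 1` unless it is
zero. -/
lemma eq_zero_of_pow_mul_bounded {β d : ℝ} (hβ : 1 < β) (h : ∀ m : ℕ, β ^ m * |d| ≤ 1) :
    d = 0 := by
  by_contra hd
  have hpos : 0 < |d| := abs_pos.2 hd
  obtain ⟨m, hm⟩ := pow_unbounded_of_one_lt (1 / |d|) hβ
  rw [div_lt_iff₀ hpos] at hm
  exact absurd (h m) (not_le.2 hm)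

lemma betaR_eq_zero_of_digits {β t : ℝ} (hβ : 1 < β) (ht : 0 ≤ t) (ht1 : t ≤ 1)
    (h : ∀ m, betaDigit β t m = 0) : t = 0 := by
  have hr : ∀ m, betaR β t m = β ^ m * t := by
    intro m
    induction m with
    | zero => simp [betaR]
    | succ m ih => rw [betaR_succ hβ ht, h, ih]; push_cast; ring
  refine eq_zero_of_pow_mul_bounded hβ fun m => ?_
  rw [abs_of_nonneg ht, ← hr]
  exact betaR_le_one β ht1 m

/-! ### Remainders of the generating sequence -/

/-- `ρ` is the sequence of remainders in `(0, 1]` of the quasi-greedy expansion `g` of `1`. -/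
structure IsRemainder (β : ℝ) (g : ℕ → ℕ) (ρ : ℕ → ℝ) : Prop where
  zero : ρ 0 = 1
  pos : ∀ k, 0 < ρ k
  le_one : ∀ k, ρ k ≤ 1
  succ : ∀ k, ρ (k + 1) = β * ρ k - g k

lemma IsGenSeq.exists_isRemainder {β : ℝ} (hβ : 1 < β) {g : ℕ → ℕ} (hg : IsGenSeq β g) :
    ∃ ρ, IsRemainder β g ρ := by
  rcases hg with ⟨hnz, rfl⟩ | ⟨k, hk, hk0, hgk⟩
  · refine ⟨betaR β 1, rfl, fun k => ?_, betaR_le_one β le_rfl, betaR_succ hβ zero_le_one⟩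
    refine lt_of_le_of_ne (betaR_nonneg β zero_le_one k) fun h => hnz ⟨k, fun m hm => ?_⟩
    exact betaDigit_eq_zero_of_betaR_eq_zero h.symm hm
  · have hz : betaR β 1 (k + 1) = 0 := by
      refine betaR_eq_zero_of_digits hβ (betaR_nonneg β zero_le_one _)
        (betaR_le_one β le_rfl _) fun m => ?_
      rw [← betaDigit_add]
      exact hk0 _ (by omega)
    refine ⟨fun m => betaR β 1 (m % (k + 1)), by simp [betaR], fun m => ?_,
      fun m => betaR_le_one β le_rfl _, fun m => ?_⟩
    · refine lt_of_le_of_ne (betaR_nonneg β zero_le_one _) fun h => hk ?_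
      exact betaDigit_eq_zero_of_betaR_eq_zero h.symm
        (Nat.lt_succ_iff.1 (Nat.mod_lt m (Nat.succ_pos k)))
    · have hs := betaR_succ hβ zero_le_one (m % (k + 1))
      have hmod : m % (k + 1) < k + 1 := Nat.mod_lt m (Nat.succ_pos k)
      rw [hgk]
      by_cases h : m % (k + 1) = k
      · have h' : (m + 1) % (k + 1) = 0 := by
          rw [← Nat.mod_add_mod, h, Nat.mod_self]
        rw [h, hz] at hs
        have h1 : 1 ≤ betaDigit β 1 k := Nat.one_le_iff_ne_zero.2 hk
        simp only [h, h', if_true, Nat.cast_sub h1, betaR, Nat.cast_one]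
        linarith
      · have h' : (m + 1) % (k + 1) = m % (k + 1) + 1 := by
          rw [← Nat.mod_add_mod, Nat.mod_eq_of_lt (by omega)]
        simp only [h, h', if_false]
        exact hs

namespace IsRemainder

variable {β : ℝ} {g : ℕ → ℕ} {ρ : ℕ → ℝ}

lemma digit_le (h : IsRemainder β g ρ) (hβ : 1 < β) {a b : ℕ} (hab : ρ a ≤ ρ b) :
    g a ≤ g b := by
  have h1 := h.succ a
  have h2 := h.succ b
  have h3 := h.pos (a + 1)
  have h4 := h.le_one (b + 1)
  have h5 : β * ρ a ≤ β * ρ b := by gcongr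
  have h6 : (g a : ℝ) < g b + 1 := by linarith
  exact Nat.lt_succ_iff.1 (by exact_mod_cast h6)

lemma add_eq (h : IsRemainder β g ρ) (hβ : 1 < β) {a b : ℕ} (hab : ρ a = ρ b) (m : ℕ) :
    ρ (a + m) = ρ (b + m) := by
  induction m with
  | zero => exact hab
  | succ m ih =>
    rw [← add_assoc, ← add_assoc, h.succ, h.succ, ih,
      le_antisymm (h.digit_le hβ ih.le) (h.digit_le hβ ih.ge)]

lemma digit_add_eq (h : IsRemainder β g ρ) (hβ : 1 < β) {a b : ℕ} (hab : ρ a = ρ b) (m : ℕ) :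
    g (a + m) = g (b + m) :=
  le_antisymm (h.digit_le hβ (h.add_eq hβ hab m).le) (h.digit_le hβ (h.add_eq hβ hab m).ge)

lemma eq_of_digit_add_eq (h : IsRemainder β g ρ) (hβ : 1 < β) {a b : ℕ}
    (hab : ∀ m, g (a + m) = g (b + m)) : ρ a = ρ b := by
  have hd : ∀ m, ρ (a + m) - ρ (b + m) = β ^ m * (ρ a - ρ b) := by
    intro m
    induction m with
    | zero => simp
    | succ m ih =>
      rw [← add_assoc, ← add_assoc, h.succ, h.succ, hab, pow_succ]
      linear_combination β * ih
  refine sub_eq_zero.1 (eq_zero_of_pow_mul_bounded hβ fun m => ?_)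
  have hpow : 0 ≤ β ^ m := pow_nonneg (by linarith) m
  rw [← abs_of_nonneg hpow, ← abs_mul, ← hd, abs_le]
  have h1 := h.pos (a + m)
  have h2 := h.pos (b + m)
  have h3 := h.le_one (a + m)
  have h4 := h.le_one (b + m)
  constructor <;> linarith

end IsRemainder

/-! ### The cover graph -/

section Cover

variable {n p : ℕ} {hp : 0 < p} {g : ℕ → ℕ}

/-- The (0-based) index of the source of an edge of `betaGraph`. -/
def srcIdx (e : (betaGraph n p hp g).E) : ℕ := Fin.val (n := n + p) ((betaGraph n p hp g).src e)

/-- The (0-based) index of the target of an edge of `betaGraph`. -/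
def tgtIdx (e : (betaGraph n p hp g).E) : ℕ := Fin.val (n := n + p) ((betaGraph n p hp g).tgt e)

lemma srcIdx_lt (e : (betaGraph n p hp g).E) : srcIdx e < n + p :=
  Fin.isLt (n := n + p) _

lemma edge_cases (e : (betaGraph n p hp g).E) :
    ((betaGraph n p hp g).lab e < g (srcIdx e) ∧ tgtIdx e = 0) ∨
    ((betaGraph n p hp g).lab e = g (srcIdx e) ∧
      (tgtIdx e = srcIdx e + 1 ∨ (srcIdx e + 1 = n + p ∧ tgtIdx e = n))) := by
  rcases e with ⟨i, k⟩ | i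
  · exact Or.inl ⟨k.isLt, rfl⟩
  · refine Or.inr ⟨rfl, ?_⟩
    by_cases h : (i : ℕ) + 1 < n + p
    · exact Or.inl (by simp [tgtIdx, srcIdx, betaGraph, h])
    · refine Or.inr ⟨?_, by simp [tgtIdx, betaGraph, h]⟩
      have := i.isLt
      change (i : ℕ) + 1 = n + p
      omega

lemma exists_edge (v : (betaGraph n p hp g).V) {a : ℕ}
    (ha : a ≤ g (Fin.val (n := n + p) v)) :
    ∃ e, (betaGraph n p hp g).src e = v ∧ (betaGraph n p hp g).lab e = a := by
  rcases ha.lt_or_eq with h | h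
  · exact ⟨Sum.inl ⟨v, ⟨a, h⟩⟩, rfl, rfl⟩
  · exact ⟨Sum.inr v, rfl, h.symm⟩

lemma betaGraph_rightResolving : (betaGraph n p hp g).RightResolving := by
  rintro (⟨i, k⟩ | i) (⟨j, l⟩ | j) hs hl
  · obtain rfl : i = j := hs
    obtain rfl : k = l := Fin.ext hl
    rfl
  · obtain rfl : i = j := hs
    exact absurd hl k.isLt.ne
  · obtain rfl : i = j := hs
    exact absurd hl l.isLt.ne'
  · obtain rfl : i = j := hs
    rfl

instance : Finite (betaGraph n p hp g).E :=
  inferInstanceAs (Finite ((Σ i : Fin (n + p), Fin (g (i : ℕ))) ⊕ Fin (n + p)))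

lemma tgtIdx_eq {e : ℤ → (betaGraph n p hp g).E} (he : e ∈ (betaGraph n p hp g).paths) (i : ℤ) :
    tgtIdx (e i) = srcIdx (e (i + 1)) :=
  congrArg (Fin.val (n := n + p)) (he i)

/-- Paths with the same labels that meet coincide from then on. -/
lemma eq_add_of_srcIdx_eq {e₁ e₂ : ℤ → (betaGraph n p hp g).E}
    (h₁ : e₁ ∈ (betaGraph n p hp g).paths) (h₂ : e₂ ∈ (betaGraph n p hp g).paths)
    (hl : (betaGraph n p hp g).labelMap e₁ = (betaGraph n p hp g).labelMap e₂) {i j : ℤ}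
    (hij : i ≤ j) (hs : srcIdx (e₁ i) = srcIdx (e₂ i)) : e₁ j = e₂ j := by
  induction j, hij using Int.leInduction with
  | base =>
    exact betaGraph_rightResolving _ _ (Fin.val_injective (n := n + p) hs) (congrFun hl i)
  | succ j _ ih =>
    refine betaGraph_rightResolving _ _ ?_ (congrFun hl (j + 1))
    rw [← h₁ j, ← h₂ j, ih]

/-- `e` follows only the edges labelled by the digits of `g` before some time. -/
def PurePast (e : ℤ → (betaGraph n p hp g).E) : Prop :=
  ∃ i : ℤ, ∀ j < i, (betaGraph n p hp g).lab (e j) = g (srcIdx (e j))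

variable {β : ℝ} {ρ : ℕ → ℝ}

lemma remainder_tgt (h : IsRemainder β g ρ) (hnp : ρ (n + p) = ρ n)
    {e : (betaGraph n p hp g).E} (hu : (betaGraph n p hp g).lab e = g (srcIdx e)) :
    ρ (tgtIdx e) = β * ρ (srcIdx e) - (betaGraph n p hp g).lab e := by
  rcases edge_cases e with ⟨hl, -⟩ | ⟨-, ht | ⟨hs, ht⟩⟩
  · exact absurd hu hl.ne
  · rw [ht, h.succ, hu]
  · rw [ht, ← hnp, ← hs, h.succ, hu]

/-- Reading the same letter preserves the order of the remainders of the vertices. -/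
lemma remainder_step (h : IsRemainder β g ρ) (hβ : 1 < β) (hnp : ρ (n + p) = ρ n)
    {e₁ e₂ : (betaGraph n p hp g).E}
    (hl : (betaGraph n p hp g).lab e₁ = (betaGraph n p hp g).lab e₂)
    (hρ : ρ (srcIdx e₁) ≤ ρ (srcIdx e₂)) : ρ (tgtIdx e₁) ≤ ρ (tgtIdx e₂) := by
  have hg := h.digit_le hβ hρ
  rcases edge_cases e₂ with ⟨-, ht⟩ | ⟨hu₂, -⟩
  · rw [ht, h.zero]
    exact h.le_one _
  · rcases edge_cases e₁ with ⟨hlt, -⟩ | ⟨hu₁, -⟩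
    · omega
    · rw [remainder_tgt h hnp hu₁, remainder_tgt h hnp hu₂, hl]
      gcongr

lemma remainder_le_of_le (h : IsRemainder β g ρ) (hβ : 1 < β) (hnp : ρ (n + p) = ρ n)
    {e₁ e₂ : ℤ → (betaGraph n p hp g).E}
    (h₁ : e₁ ∈ (betaGraph n p hp g).paths) (h₂ : e₂ ∈ (betaGraph n p hp g).paths)
    (hl : (betaGraph n p hp g).labelMap e₁ = (betaGraph n p hp g).labelMap e₂) {i j : ℤ}
    (hij : i ≤ j) (hρ : ρ (srcIdx (e₁ i)) ≤ ρ (srcIdx (e₂ i))) :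
    ρ (srcIdx (e₁ j)) ≤ ρ (srcIdx (e₂ j)) := by
  induction j, hij using Int.leInduction with
  | base => exact hρ
  | succ j _ ih =>
    rw [← tgtIdx_eq h₁, ← tgtIdx_eq h₂]
    exact remainder_step h hβ hnp (congrFun hl j) ih

/-- Of two distinct paths with the same labels, the lower one has a pure past. -/
lemma purePast_of_le (h : IsRemainder β g ρ) (hβ : 1 < β)
    {e₁ e₂ : ℤ → (betaGraph n p hp g).E}
    (h₁ : e₁ ∈ (betaGraph n p hp g).paths) (h₂ : e₂ ∈ (betaGraph n p hp g).paths)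
    (hl : (betaGraph n p hp g).labelMap e₁ = (betaGraph n p hp g).labelMap e₂)
    (hne : e₁ ≠ e₂) (hρ : ∀ i, ρ (srcIdx (e₁ i)) ≤ ρ (srcIdx (e₂ i))) : PurePast e₁ := by
  obtain ⟨i, hi⟩ := Function.ne_iff.1 hne
  refine ⟨i, fun j hj => ?_⟩
  rcases edge_cases (e₁ j) with ⟨hlt, ht₁⟩ | ⟨hu, -⟩
  · rcases edge_cases (e₂ j) with ⟨-, ht₂⟩ | ⟨hu₂, -⟩
    · refine absurd (eq_add_of_srcIdx_eq h₁ h₂ hl (i := j + 1) (by omega) ?_) hi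
      rw [← tgtIdx_eq h₁, ← tgtIdx_eq h₂, ht₁, ht₂]
    · have := h.digit_le hβ (hρ j)
      have hlj : (betaGraph n p hp g).lab (e₁ j) = (betaGraph n p hp g).lab (e₂ j) :=
        congrFun hl j
      omega
  · exact hu

lemma purePast_or_purePast (h : IsRemainder β g ρ) (hβ : 1 < β) (hnp : ρ (n + p) = ρ n)
    {e₁ e₂ : ℤ → (betaGraph n p hp g).E}
    (h₁ : e₁ ∈ (betaGraph n p hp g).paths) (h₂ : e₂ ∈ (betaGraph n p hp g).paths)
    (hl : (betaGraph n p hp g).labelMap e₁ = (betaGraph n p hp g).labelMap e₂)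
    (hne : e₁ ≠ e₂) : PurePast e₁ ∨ PurePast e₂ := by
  by_cases hρ : ∀ i, ρ (srcIdx (e₁ i)) ≤ ρ (srcIdx (e₂ i))
  · exact Or.inl (purePast_of_le h hβ h₁ h₂ hl hne hρ)
  · push Not at hρ
    obtain ⟨i, hi⟩ := hρ
    refine Or.inr (purePast_of_le h hβ h₂ h₁ hl.symm hne.symm fun j => ?_)
    rcases le_total i j with hij | hij
    · exact remainder_le_of_le h hβ hnp h₂ h₁ hl.symm hij hi.le
    · by_contra hj
      exact absurd (remainder_le_of_le h hβ hnp h₁ h₂ hl hij (not_le.1 hj).le) (not_le.2 hi)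

/-- A path with a pure past stays among the vertices of the cycle in that past. -/
lemma le_srcIdx_of_pure {e : ℤ → (betaGraph n p hp g).E} (he : e ∈ (betaGraph n p hp g).paths)
    {i : ℤ} (hi : ∀ j < i, (betaGraph n p hp g).lab (e j) = g (srcIdx (e j))) {j : ℤ}
    (hj : j ≤ i) : n ≤ srcIdx (e j) := by
  have key : ∀ s < n, ∀ j ≤ i, srcIdx (e j) ≠ s := by
    intro s
    induction s with
    | zero =>
      intro hs j hj h0
      have ht := tgtIdx_eq he (j - 1)
      rw [sub_add_cancel, h0] at ht
      rcases edge_cases (e (j - 1)) with ⟨hlt, -⟩ | ⟨-, h⟩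
      · exact hlt.ne (hi _ (by omega))
      · omega
    | succ s ih =>
      intro hs j hj h0
      have ht := tgtIdx_eq he (j - 1)
      rw [sub_add_cancel, h0] at ht
      rcases edge_cases (e (j - 1)) with ⟨hlt, -⟩ | ⟨-, h⟩
      · exact hlt.ne (hi _ (by omega))
      · exact ih (by omega) (j - 1) (by omega) (by omega)
  by_contra hlt
  exact key _ (not_le.1 hlt) j hj rfl

/-- The last vertex of the cycle occurs arbitrarily early in a pure past. -/
lemma exists_srcIdx_eq_last {e : ℤ → (betaGraph n p hp g).E}
    (he : e ∈ (betaGraph n p hp g).paths) (hpp : PurePast e) (k : ℤ) :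
    ∃ j ≤ k, srcIdx (e j) + 1 = n + p := by
  obtain ⟨i, hi⟩ := hpp
  have key : ∀ d : ℕ, ∀ j : ℤ, j + d ≤ min i k → srcIdx (e j) + 1 + d = n + p →
      ∃ j ≤ k, srcIdx (e j) + 1 = n + p := by
    intro d
    induction d with
    | zero => exact fun j hj h => ⟨j, by omega, h⟩
    | succ d ih =>
      intro j hj h
      refine ih (j + 1) (by push_cast at hj ⊢; omega) ?_
      rw [← tgtIdx_eq he]
      rcases edge_cases (e j) with ⟨hlt, -⟩ | ⟨-, ht⟩
      · exact absurd (hi _ (by push_cast at hj; omega)) hlt.ne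
      · omega
  have hlt := srcIdx_lt (e (min i k - (n + p : ℕ)))
  exact key (n + p - 1 - srcIdx (e (min i k - (n + p : ℕ)))) (min i k - (n + p : ℕ))
    (by omega) (by omega)

/-- A path with a pure past is determined by its labels. -/
lemma eq_of_purePast (h : IsRemainder β g ρ) (hβ : 1 < β) (hnp : ρ (n + p) = ρ n)
    (hpmin : ∀ p' : ℕ, 0 < p' → (∃ n' : ℕ, ∀ i ≥ n', g (i + p') = g i) → p ≤ p')
    {e₁ e₂ : ℤ → (betaGraph n p hp g).E}
    (h₁ : e₁ ∈ (betaGraph n p hp g).paths) (h₂ : e₂ ∈ (betaGraph n p hp g).paths)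
    (hl : (betaGraph n p hp g).labelMap e₁ = (betaGraph n p hp g).labelMap e₂)
    (hp₁ : PurePast e₁) (hp₂ : PurePast e₂) : e₁ = e₂ := by
  obtain ⟨i₁, hi₁⟩ := hp₁
  obtain ⟨i₂, hi₂⟩ := hp₂
  funext k
  set j := min k (min i₁ i₂) with hj
  refine eq_add_of_srcIdx_eq h₁ h₂ hl (i := j) (by omega) ?_
  have hdiff : ∀ m : ℕ, ρ (srcIdx (e₁ j)) - ρ (srcIdx (e₂ j)) =
      β ^ m * (ρ (srcIdx (e₁ (j - m))) - ρ (srcIdx (e₂ (j - m)))) := by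
    intro m
    induction m with
    | zero => simp
    | succ m ih =>
      have hs : j - ((m + 1 : ℕ) : ℤ) + 1 = j - m := by push_cast; ring
      have ht₁ := tgtIdx_eq h₁ (j - ((m + 1 : ℕ) : ℤ))
      have ht₂ := tgtIdx_eq h₂ (j - ((m + 1 : ℕ) : ℤ))
      have hu₁ := remainder_tgt h hnp (hi₁ (j - ((m + 1 : ℕ) : ℤ)) (by push_cast; omega))
      have hu₂ := remainder_tgt h hnp (hi₂ (j - ((m + 1 : ℕ) : ℤ)) (by push_cast; omega))
      have hlj : (betaGraph n p hp g).lab (e₁ (j - ((m + 1 : ℕ) : ℤ))) =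
          (betaGraph n p hp g).lab (e₂ (j - ((m + 1 : ℕ) : ℤ))) := congrFun hl _
      rw [ih, ← hs, ← ht₁, ← ht₂, hu₁, hu₂, hlj, pow_succ]
      ring
  have heq : ρ (srcIdx (e₁ j)) = ρ (srcIdx (e₂ j)) := by
    obtain ⟨a, b, hab, hE⟩ := Finite.exists_ne_map_eq_of_infinite
      fun m : ℕ => (e₁ (j - m), e₂ (j - m))
    have ha := hdiff a
    have hb := hdiff b
    simp only [Prod.mk.injEq] at hE
    rw [hE.1, hE.2] at ha
    have hz := ha.symm.trans hb
    rcases mul_eq_mul_right_iff.1 hz with hpow | h0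
    · exact absurd (pow_right_injective₀ (by linarith) hβ.ne' hpow) hab
    · rw [h0, mul_zero] at hb
      linarith
  have hn₁ := le_srcIdx_of_pure h₁ hi₁ (j := j) (by omega)
  have hn₂ := le_srcIdx_of_pure h₂ hi₂ (j := j) (by omega)
  have hlt₁ := srcIdx_lt (e₁ j)
  have hlt₂ := srcIdx_lt (e₂ j)
  have key : ∀ a b : ℕ, n ≤ a → b < n + p → ρ a = ρ b → ¬ a < b := by
    intro a b ha hb hab hlt
    have := hpmin (b - a) (by omega) ⟨a, fun i hi => ?_⟩
    · omega
    · have := h.digit_add_eq hβ hab (i - a)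
      rw [show a + (i - a) = i by omega, show b + (i - a) = i + (b - a) by omega] at this
      exact this.symm
  exact le_antisymm (not_lt.1 (key _ _ hn₂ hlt₁ heq.symm)) (not_lt.1 (key _ _ hn₁ hlt₂ heq))

/-! ### The presented shift space -/

/-- Every finite label word along a path is the beginning of a greedy expansion. -/
lemma exists_digits_of_path (h : IsRemainder β g ρ) (hβ : 1 < β) (hnp : ρ (n + p) = ρ n)
    {e : ℤ → (betaGraph n p hp g).E} (he : e ∈ (betaGraph n p hp g).paths) (m : ℕ) :
    ∀ i : ℤ, ∃ t : ℝ, 0 ≤ t ∧ t < ρ (srcIdx (e i)) ∧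
      ∀ j < m, betaDigit β t j = (betaGraph n p hp g).lab (e (i + j)) := by
  induction m with
  | zero => exact fun i => ⟨0, le_rfl, h.pos _, fun j hj => absurd hj (Nat.not_lt_zero j)⟩
  | succ m ih =>
    intro i
    obtain ⟨t, ht0, htρ, htd⟩ := ih (i + 1)
    rw [← tgtIdx_eq he] at htρ
    have ht1 : t < 1 := htρ.trans_le (h.le_one _)
    have hβ0 : 0 < β := by linarith
    set y := (betaGraph n p hp g).lab (e i) with hy
    have hmul : β * ((t + y) / β) = t + y := by field_simp
    have hR : betaR β ((t + y) / β) 1 = t := by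
      rw [betaR, betaR, hmul, Int.fract_add_natCast, Int.fract_eq_self.2 ⟨ht0, ht1⟩]
    refine ⟨(t + y) / β, by positivity, ?_, ?_⟩
    · rw [div_lt_iff₀ hβ0]
      rcases edge_cases (e i) with ⟨hlt, -⟩ | ⟨hu, -⟩
      · have h1 := h.succ (srcIdx (e i))
        have h2 := h.pos (srcIdx (e i) + 1)
        have h3 : (y : ℝ) + 1 ≤ g (srcIdx (e i)) := by exact_mod_cast hlt
        linarith
      · have := remainder_tgt h hnp hu
        linarith
    · rintro (_ | j) hj
      · rw [betaDigit, betaR, hmul, Int.floor_add_natCast, Int.floor_eq_zero_iff.2 ⟨ht0, ht1⟩]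
        simp [hy]
      · rw [add_comm j 1, betaDigit_add, hR, htd j (by omega)]
        congr 2
        push_cast
        ring

lemma mapsTo_betaShift (h : IsRemainder β g ρ) (hβ : 1 < β) (hnp : ρ (n + p) = ρ n) :
    Set.MapsTo (betaGraph n p hp g).labelMap (betaGraph n p hp g).paths (betaShift β) := by
  intro e he i m
  obtain ⟨t, ht0, htρ, htd⟩ := exists_digits_of_path h hβ hnp he m i
  refine ⟨t, ⟨ht0, htρ.le.trans (h.le_one _)⟩, 0, m, ?_⟩
  rw [wordAt]
  congr 1
  funext k
  rw [zero_add, htd k k.isLt]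
  rfl

/-- An expansion with remainders in `[0, 1)` can be read along a path starting at the first
vertex. -/
lemma exists_path_of_remainders (h : IsRemainder β g ρ) (hβ : 1 < β) (hnp : ρ (n + p) = ρ n)
    {r : ℕ → ℝ} {y : ℕ → ℕ} (hr : ∀ j, 0 ≤ r j ∧ r j < 1)
    (hstep : ∀ j, r (j + 1) = β * r j - y j) :
    ∃ f : ℕ → (betaGraph n p hp g).E,
      (∀ j, (betaGraph n p hp g).tgt (f j) = (betaGraph n p hp g).src (f (j + 1))) ∧
      (∀ j, (betaGraph n p hp g).lab (f j) = y j) ∧ ∀ j, r j < ρ (srcIdx (f j)) := by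
  have hedge : ∀ (j : ℕ) (v : {v : (betaGraph n p hp g).V // r j < ρ (Fin.val (n := n + p) v)}),
      ∃ e, (betaGraph n p hp g).src e = v ∧ (betaGraph n p hp g).lab e = y j ∧
        r (j + 1) < ρ (tgtIdx e) := by
    rintro j ⟨v, hv⟩
    have h1 := h.succ (Fin.val (n := n + p) v)
    have h2 := h.le_one (Fin.val (n := n + p) v + 1)
    have h3 := (hr (j + 1)).1
    have h4 := hstep j
    have h5 : β * r j < β * ρ (Fin.val (n := n + p) v) := by gcongr
    have h6 : (y j : ℝ) < g (Fin.val (n := n + p) v) + 1 := by linarith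
    have h7 : y j ≤ g (Fin.val (n := n + p) v) := Nat.lt_succ_iff.1 (by exact_mod_cast h6)
    obtain ⟨e, hs, hl⟩ := exists_edge v h7
    refine ⟨e, hs, hl, ?_⟩
    rcases edge_cases e with ⟨-, ht⟩ | ⟨hu, -⟩
    · rw [ht, h.zero]
      exact (hr (j + 1)).2
    · rw [remainder_tgt h hnp hu, hl, h4, srcIdx, hs]
      linarith
  choose f hs hl hlt using hedge
  let st : ∀ j, {v : (betaGraph n p hp g).V // r j < ρ (Fin.val (n := n + p) v)} :=
    fun j => Nat.rec ⟨(⟨0, by omega⟩ : Fin (n + p)), by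
      change r 0 < ρ 0
      rw [h.zero]
      exact (hr 0).2⟩ (fun j v => ⟨(betaGraph n p hp g).tgt (f j v), hlt j v⟩) j
  refine ⟨fun j => f j (st j), fun j => ?_, fun j => hl j _, fun j => ?_⟩
  · rw [hs]
  · rw [srcIdx, hs]
    exact (st j).2

/-- Compactness: if longer and longer central blocks of `x` are read from remainders in `[0, 1)`,
then `x` is the label sequence of a path that lies above such remainders. -/
lemma exists_biinfinite_path (h : IsRemainder β g ρ) (hβ : 1 < β) (hnp : ρ (n + p) = ρ n)
    {x : Seq} {r : ℕ → ℕ → ℝ} {y : ℕ → ℕ → ℕ} (hr : ∀ N j, 0 ≤ r N j ∧ r N j < 1)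
    (hstep : ∀ N j, r N (j + 1) = β * r N j - y N j)
    (hx : ∀ N j : ℕ, j ≤ 2 * N → y N j = x (j - N)) :
    ∃ e ∈ (betaGraph n p hp g).paths, (betaGraph n p hp g).labelMap e = x ∧
      ∀ i : ℤ, ∃ N : ℕ, 0 ≤ i + N ∧ r N (i + N).toNat < ρ (srcIdx (e i)) := by
  choose f hf hfl hfr using fun N =>
    exists_path_of_remainders (hp := hp) h hβ hnp (hr N) (hstep N)
  let U : Ultrafilter ℕ := Filter.hyperfilter ℕ
  have hlim : ∀ i : ℤ, ∃ e, ∀ᶠ N in (U : Filter ℕ), f N (i + N).toNat = e := by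
    intro i
    obtain ⟨e, he⟩ := Ultrafilter.eq_pure_of_finite (U.map fun N => f N (i + N).toNat)
    refine ⟨e, ?_⟩
    have : {e} ∈ U.map fun N => f N (i + N).toNat := by rw [he]; exact Set.mem_singleton e
    exact this
  choose e he using hlim
  have hbig : ∀ i : ℤ, ∀ᶠ N : ℕ in (U : Filter ℕ), i.natAbs ≤ N := fun i =>
    Nat.hyperfilter_le_atTop (Filter.eventually_ge_atTop i.natAbs)
  refine ⟨e, fun i => ?_, funext fun i => ?_, fun i => ?_⟩
  · obtain ⟨N, ⟨h1, h2⟩, h3⟩ := (((he i).and (he (i + 1))).and (hbig i)).exists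
    rw [← h1, ← h2, hf]
    congr 2
    omega
  · obtain ⟨N, h1, h3⟩ := ((he i).and (hbig i)).exists
    rw [LGraph.labelMap, ← h1, hfl, hx _ _ (by omega)]
    congr 1
    omega
  · obtain ⟨N, h1, h3⟩ := ((he i).and (hbig i)).exists
    exact ⟨N, by omega, h1 ▸ hfr N _⟩

lemma surjOn_betaShift (h : IsRemainder β g ρ) (hβ : 1 < β) (hnp : ρ (n + p) = ρ n) :
    Set.SurjOn (betaGraph n p hp g).labelMap (betaGraph n p hp g).paths (betaShift β) := by
  intro x hx
  have hdig : ∀ N : ℕ, ∃ t : ℝ, (0 ≤ t ∧ t < 1) ∧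
      ∀ j : ℕ, j ≤ 2 * N → betaDigit β t j = x (j - N) := by
    intro N
    obtain ⟨t, ht, n₀, m, hw⟩ := hx (-N - 1) (2 * N + 2)
    refine ⟨betaR β t (n₀ + 1), ⟨Int.fract_nonneg _, Int.fract_lt_one _⟩, fun j hj => ?_⟩
    have hm : 2 * N + 2 = m := by simpa [wordAt] using congrArg List.length hw
    subst hm
    have hj' := congrFun (List.ofFn_injective hw) ⟨j + 1, by omega⟩
    simp only at hj'
    rw [← betaDigit_add, show n₀ + 1 + j = n₀ + (j + 1) by omega, ← hj']
    congr 1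
    push_cast
    ring
  choose t ht htd using hdig
  obtain ⟨e, he, hl, -⟩ := exists_biinfinite_path (hp := hp) h hβ hnp (x := x)
    (r := fun N => betaR β (t N)) (y := fun N => betaDigit β (t N))
    (fun N j => ⟨betaR_nonneg β (ht N).1 j, betaR_lt_one β (ht N).2 j⟩)
    (fun N => betaR_succ hβ (ht N).1) htd
  exact ⟨e, he, hl⟩

/-! ### Fibers -/

lemma fiber_le_two (h : IsRemainder β g ρ) (hβ : 1 < β) (hnp : ρ (n + p) = ρ n)
    (hpmin : ∀ p' : ℕ, 0 < p' → (∃ n' : ℕ, ∀ i ≥ n', g (i + p') = g i) → p ≤ p')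
    {e₁ e₂ e₃ : ℤ → (betaGraph n p hp g).E} (h₁ : e₁ ∈ (betaGraph n p hp g).paths)
    (h₂ : e₂ ∈ (betaGraph n p hp g).paths) (h₃ : e₃ ∈ (betaGraph n p hp g).paths)
    (h₁₂ : (betaGraph n p hp g).labelMap e₁ = (betaGraph n p hp g).labelMap e₂)
    (h₂₃ : (betaGraph n p hp g).labelMap e₂ = (betaGraph n p hp g).labelMap e₃) :
    e₁ = e₂ ∨ e₁ = e₃ ∨ e₂ = e₃ := by
  by_contra! hne
  obtain ⟨n₁₂, n₁₃, n₂₃⟩ := hne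
  have u₁₂ := fun a b => n₁₂ (eq_of_purePast h hβ hnp hpmin h₁ h₂ h₁₂ a b)
  have u₁₃ := fun a b => n₁₃ (eq_of_purePast h hβ hnp hpmin h₁ h₃ (h₁₂.trans h₂₃) a b)
  have u₂₃ := fun a b => n₂₃ (eq_of_purePast h hβ hnp hpmin h₂ h₃ h₂₃ a b)
  have o₁₂ := purePast_or_purePast h hβ hnp h₁ h₂ h₁₂ n₁₂
  have o₁₃ := purePast_or_purePast h hβ hnp h₁ h₃ (h₁₂.trans h₂₃) n₁₃
  have o₂₃ := purePast_or_purePast h hβ hnp h₂ h₃ h₂₃ n₂₃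
  tauto

lemma injOn_of_last_eq_one (h : IsRemainder β g ρ) (hβ : 1 < β) (hnp : ρ (n + p) = ρ n)
    (hpmin : ∀ p' : ℕ, 0 < p' → (∃ n' : ℕ, ∀ i ≥ n', g (i + p') = g i) → p ≤ p')
    (hlast : ρ (n + p - 1) = 1) :
    Set.InjOn (betaGraph n p hp g).labelMap (betaGraph n p hp g).paths := by
  have key : ∀ e₁ ∈ (betaGraph n p hp g).paths, ∀ e₂ ∈ (betaGraph n p hp g).paths,
      (betaGraph n p hp g).labelMap e₁ = (betaGraph n p hp g).labelMap e₂ → PurePast e₁ →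
      e₁ = e₂ := by
    intro e₁ h₁ e₂ h₂ hl hp₁
    by_contra hne
    refine hne (eq_of_purePast h hβ hnp hpmin h₁ h₂ hl hp₁
      (purePast_of_le h hβ h₂ h₁ hl.symm (Ne.symm hne) fun i => ?_))
    obtain ⟨j, hj, hs⟩ := exists_srcIdx_eq_last h₁ hp₁ i
    refine remainder_le_of_le h hβ hnp h₂ h₁ hl.symm hj ?_
    rw [show srcIdx (e₁ j) = n + p - 1 by omega, hlast]
    exact h.le_one _
  intro e₁ h₁ e₂ h₂ hl
  by_contra hne
  rcases purePast_or_purePast h hβ hnp h₁ h₂ hl hne with hp₁ | hp₂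
  · exact hne (key e₁ h₁ e₂ h₂ hl hp₁)
  · exact hne (key e₂ h₂ e₁ h₁ hl.symm hp₂).symm

variable (n p hp g) in
/-- The path running around the cycle of `betaGraph` forever. -/
def cyclePath : ℤ → (betaGraph n p hp g).E := fun i =>
  Sum.inr (⟨n + (i % p).toNat, by
    have := Int.emod_lt_of_pos i (show (0 : ℤ) < p by omega)
    have := Int.emod_nonneg i (show (p : ℤ) ≠ 0 by omega)
    omega⟩ : Fin (n + p))

lemma cyclePath_mem : cyclePath n p hp g ∈ (betaGraph n p hp g).paths := by
  intro i
  have h1 := Int.emod_lt_of_pos i (show (0 : ℤ) < p by omega)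
  have h2 := Int.emod_nonneg i (show (p : ℤ) ≠ 0 by omega)
  refine Fin.val_injective (n := n + p) ?_
  by_cases h : n + (i % p).toNat + 1 < n + p
  · have hm : (i + 1) % (p : ℤ) = i % p + 1 := by
      rw [← Int.emod_add_emod, Int.emod_eq_of_lt (by omega) (by omega)]
    simp only [cyclePath, betaGraph, Sum.elim_inr, h, dite_true, hm]
    omega
  · have hm : (i + 1) % (p : ℤ) = 0 := by
      rw [← Int.emod_add_emod, show i % (p : ℤ) + 1 = p by omega, Int.emod_self]
    simp only [cyclePath, betaGraph, Sum.elim_inr, h, dite_false, hm]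
    omega

/-- If `g` is not periodic, the label sequence of the cycle has a second presentation. -/
lemma exists_ne_cyclePath (h : IsRemainder β g ρ) (hβ : 1 < β) (hnp : ρ (n + p) = ρ n)
    (hlt : ∀ k ≥ n, ρ k < 1) :
    ∃ e ∈ (betaGraph n p hp g).paths,
      (betaGraph n p hp g).labelMap e = (betaGraph n p hp g).labelMap (cyclePath n p hp g) ∧
      e ≠ cyclePath n p hp g := by
  have hc : cyclePath n p hp g ∈ (betaGraph n p hp g).paths := cyclePath_mem
  obtain ⟨e, he, hl, hr⟩ := exists_biinfinite_path (hp := hp) h hβ hnp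
    (x := (betaGraph n p hp g).labelMap (cyclePath n p hp g))
    (r := fun N j => ρ (srcIdx (cyclePath n p hp g (j - N))))
    (y := fun N j => (betaGraph n p hp g).lab (cyclePath n p hp g (j - N)))
    (fun N j => ⟨(h.pos _).le, hlt _ (Nat.le_add_right _ _)⟩)
    (fun N j => by
      have ht := tgtIdx_eq hc (j - N)
      rw [show ((j + 1 : ℕ) : ℤ) - N = j - N + 1 by push_cast; ring, ← ht]
      exact remainder_tgt h hnp rfl)
    (fun N j _ => rfl)
  refine ⟨e, he, hl, ?_⟩
  rintro rfl
  obtain ⟨N, hN, hlt'⟩ := hr 0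
  rw [Int.toNat_of_nonneg hN] at hlt'
  simp at hlt'

end Cover

/-- Let `β > 1` have eventually periodic generating sequence
`g = g₁⋯g_n (g_{n+1}⋯g_{n+p})^∞` (`n, p ≥ 1` minimal), let `F_β` be the explicit
right Fischer cover graph and `π` the covering map (sending a biinfinite edge
path to its label sequence).  If `g` is periodic then `π` is a bijection from
the edge paths onto `X_β`; if `g` is not periodic then `π` maps the edge paths
onto `X_β`, every fiber has at most `2` elements, and some fiber has exactly
`2` elements. -/
theorem statement11 (β : ℝ) (hβ : 1 < β) (g : ℕ → ℕ) (hg : IsGenSeq β g)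
    (n p : ℕ) (hn : 0 < n) (hp : 0 < p)
    (hper : ∀ i ≥ n, g (i + p) = g i)
    (hpmin : ∀ p' : ℕ, 0 < p' → (∃ n' : ℕ, ∀ i ≥ n', g (i + p') = g i) → p ≤ p')
    (hnmin : ∀ n' : ℕ, 0 < n' → (∀ i ≥ n', g (i + p) = g i) → n ≤ n') :
    ((∃ q : ℕ, 0 < q ∧ ∀ i : ℕ, g (i + q) = g i) →
      Set.BijOn (betaGraph n p hp g).labelMap (betaGraph n p hp g).paths
        (betaShift β)) ∧
    ((¬ ∃ q : ℕ, 0 < q ∧ ∀ i : ℕ, g (i + q) = g i) →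
      Set.MapsTo (betaGraph n p hp g).labelMap (betaGraph n p hp g).paths
        (betaShift β) ∧
      Set.SurjOn (betaGraph n p hp g).labelMap (betaGraph n p hp g).paths
        (betaShift β) ∧
      (∀ x ∈ betaShift β, ∀ e₁ e₂ e₃ : ℤ → (betaGraph n p hp g).E,
        e₁ ∈ (betaGraph n p hp g).paths → e₂ ∈ (betaGraph n p hp g).paths →
        e₃ ∈ (betaGraph n p hp g).paths →
        (betaGraph n p hp g).labelMap e₁ = x →
        (betaGraph n p hp g).labelMap e₂ = x →
        (betaGraph n p hp g).labelMap e₃ = x →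
        e₁ = e₂ ∨ e₁ = e₃ ∨ e₂ = e₃) ∧
      ∃ x ∈ betaShift β, ∃ e₁ e₂ : ℤ → (betaGraph n p hp g).E,
        e₁ ∈ (betaGraph n p hp g).paths ∧ e₂ ∈ (betaGraph n p hp g).paths ∧
        (betaGraph n p hp g).labelMap e₁ = x ∧
        (betaGraph n p hp g).labelMap e₂ = x ∧ e₁ ≠ e₂) := by
  obtain ⟨ρ, h⟩ := hg.exists_isRemainder hβ
  have hnp : ρ (n + p) = ρ n := h.eq_of_digit_add_eq hβ fun m => by
    rw [show n + p + m = n + m + p by omega]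
    exact hper _ (by omega)
  refine ⟨?_, ?_⟩
  · rintro ⟨q, hq, hgq⟩
    have hgmul : ∀ k i : ℕ, g (i + k * q) = g i := by
      intro k
      induction k with
      | zero => simp
      | succ k ih => exact fun i => by rw [Nat.succ_mul, ← add_assoc, hgq, ih]
    have hgp : ∀ i, g (i + p) = g i := by
      intro i
      have hle : n ≤ i + n * q := by nlinarith
      rw [← hgmul n (i + p), ← hgmul n i, ← hper _ hle]
      congr 1
      ring
    obtain rfl : n = 1 := le_antisymm (hnmin 1 one_pos fun i _ => hgp i) hn
    have hlast : ρ (1 + p - 1) = 1 := by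
      rw [← h.zero, Nat.add_sub_cancel_left]
      refine h.eq_of_digit_add_eq hβ fun m => ?_
      rw [zero_add, add_comm, hgp]
    exact ⟨mapsTo_betaShift h hβ hnp, injOn_of_last_eq_one h hβ hnp hpmin hlast,
      surjOn_betaShift h hβ hnp⟩
  · intro hnper
    have hlt : ∀ k ≥ n, ρ k < 1 := by
      refine fun k hk => lt_of_le_of_ne (h.le_one k) fun hk1 => hnper ⟨k, by omega, fun i => ?_⟩
      have := h.digit_add_eq hβ (hk1.trans h.zero.symm) i
      rwa [zero_add, add_comm] at this
    obtain ⟨e, he, hl, hne⟩ := exists_ne_cyclePath (hp := hp) h hβ hnp hlt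
    refine ⟨mapsTo_betaShift h hβ hnp, surjOn_betaShift h hβ hnp, ?_,
      _, mapsTo_betaShift h hβ hnp cyclePath_mem, e, _, he, cyclePath_mem, hl, rfl, hne⟩
    rintro x - e₁ e₂ e₃ h₁ h₂ h₃ hx₁ hx₂ hx₃
    exact fiber_le_two h hβ hnp hpmin h₁ h₂ h₃ (hx₁.trans hx₂.symm) (hx₂.trans hx₃.symm)

end SymbolicDynamics
end
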